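/- Every ℓ-minor [A|B] of P with |B ∩ C_j| ≥ 2 for some j lies in the ideal generated by all 2-minors of the matrices P_{C_j}, j ∈ [ℓ]. -/

import Mathlib

/-!
Pairing each even permutation `σ` with the odd permutation `σ * swap p q` writes a determinant as a
combination of the `2`-minors in its columns `p` and `q`: this is Laplace expansion along these two
columns. If the two columns lie in the same block, every term is a multiple of a block `2`-minor.
-/

open Equiv Equiv.Perm Finset

section Determinant

variable {ι R : Type*} [Fintype ι] [DecidableEq ι] [CommRing R]

theorem det_eq_sum_sign_eq_one_sub_mul_swap (N : Matrix ι ι R) {p q : ι} (hpq : p ≠ q) :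
    N.det = ∑ σ : Perm ι with sign σ = 1,
      (∏ i, N (σ i) i - ∏ i, N ((σ * swap p q) i) i) := by
  have odd_sum : ∑ σ : Perm ι with ¬ sign σ = 1, ((sign σ : ℤ) : R) * ∏ i, N (σ i) i =
      ∑ σ : Perm ι with sign σ = 1, -∏ i, N ((σ * swap p q) i) i := by
    symm
    refine sum_equiv (Equiv.mulRight (swap p q)) (fun σ => ?_) fun σ hσ => ?_
    · rcases Int.units_eq_one_or (sign σ) with h | h <;> simp [h, sign_swap hpq]
    · have hσ : sign σ = 1 := by simpa using hσ
      simp [hσ, sign_swap hpq]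
  have even_sum : ∑ σ : Perm ι with sign σ = 1, ((sign σ : ℤ) : R) * ∏ i, N (σ i) i =
      ∑ σ : Perm ι with sign σ = 1, ∏ i, N (σ i) i :=
    sum_congr rfl fun σ hσ => by simp [(mem_filter.mp hσ).2]
  rw [Matrix.det_apply', ← sum_filter_add_sum_filter_not univ (fun σ : Perm ι => sign σ = 1),
    even_sum, odd_sum, ← sum_add_distrib]
  simp only [sub_eq_add_neg]

theorem prod_sub_prod_mul_swap (N : Matrix ι ι R) {p q : ι} (hpq : p ≠ q) (σ : Perm ι) :
    ∏ i, N (σ i) i - ∏ i, N ((σ * swap p q) i) i =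
      (N (σ p) p * N (σ q) q - N (σ p) q * N (σ q) p) * ∏ i ∈ {p, q}ᶜ, N (σ i) i := by
  have swap_fixes : ∏ i ∈ {p, q}ᶜ, N ((σ * swap p q) i) i = ∏ i ∈ {p, q}ᶜ, N (σ i) i := by
    refine prod_congr rfl fun i hi => ?_
    obtain ⟨hip, hiq⟩ : i ≠ p ∧ i ≠ q := by simpa using hi
    rw [Perm.mul_apply, swap_apply_of_ne_of_ne hip hiq]
  rw [← prod_mul_prod_compl {p, q}, ← prod_mul_prod_compl {p, q} fun i => N ((σ * swap p q) i) i,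
    swap_fixes, prod_pair hpq, prod_pair hpq]
  simp only [Perm.mul_apply, swap_apply_left, swap_apply_right]
  ring

theorem det_mem_of_forall_twoMinor_mem {I : Ideal R} (N : Matrix ι ι R) {p q : ι} (hpq : p ≠ q)
    (h : ∀ i j, N i p * N j q - N i q * N j p ∈ I) : N.det ∈ I := by
  rw [det_eq_sum_sign_eq_one_sub_mul_swap N hpq]
  refine I.sum_mem fun σ _ => ?_
  rw [prod_sub_prod_mul_swap N hpq]
  exact I.mul_mem_right _ (h _ _)

end Determinant

/-- The `2`-minors of the column blocks of `M`, where the blocks are the fibres of `block`. The two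
rows or the two columns may coincide, which only adds the element `0`. -/
def blockTwoMinors {m n β R : Type*} [CommRing R] (M : Matrix m n R) (block : n → β) : Set R :=
  {x | ∃ (i₁ i₂ : m) (c₁ c₂ : n), block c₁ = block c₂ ∧ x = M i₁ c₁ * M i₂ c₂ - M i₁ c₂ * M i₂ c₁}

theorem ellMinor_mem_span_blockTwoMinors_general {ι m n β R : Type*} [Fintype ι] [DecidableEq ι]
    [CommRing R] (M : Matrix m n R) (block : n → β) (row : ι → m) (col : ι → n)
    (hcol : ¬ Function.Injective (block ∘ col)) :
    (M.submatrix row col).det ∈ Ideal.span (blockTwoMinors M block) := by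
  obtain ⟨p, q, hblock, hpq⟩ := Function.not_injective_iff.mp hcol
  exact det_mem_of_forall_twoMinor_mem _ hpq fun i j =>
    Ideal.subset_span ⟨row i, row j, col p, col q, hblock, rfl⟩

theorem not_injective_comp_orderEmbOfFin {α β : Type*} [LinearOrder α] [DecidableEq β]
    {B : Finset α} {ℓ : ℕ} (hB : B.card = ℓ) (f : α → β) {y : β}
    (hy : 1 < (B.filter (fun c => f c = y)).card) :
    ¬ Function.Injective (f ∘ B.orderEmbOfFin hB) := by
  intro hinj
  have injOn : Set.InjOn f B := by
    rw [← range_orderEmbOfFin B hB]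
    exact hinj.injOn_range
  refine hy.not_ge (card_le_one.mpr fun b hb c hc => ?_)
  rw [mem_filter] at hb hc
  exact injOn hb.1 hc.1 (hb.2.trans hc.2.symm)

/-- Every `ℓ`-minor `[A|B]` of a `d × kℓ` matrix whose column set `B` meets some column
block `C j` in at least two columns lies in the ideal generated by all `2`-minors of the
blocks `P_{C j}`.  Columns are indexed by `Fin (k*ℓ)` and the block of a column `c`
is `c / k`. -/
theorem ellMinor_mem_span_blockTwoMinors (R : Type) [CommRing R] (d k ℓ : ℕ) (hld : ℓ ≤ d)
    (M : Matrix (Fin d) (Fin (k * ℓ)) R)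
    (A : Finset (Fin d)) (B : Finset (Fin (k * ℓ)))
    (hA : A.card = ℓ) (hB : B.card = ℓ)
    (hmeet : ∃ j : Fin ℓ, 2 ≤ (B.filter (fun c => c.val / k = j.val)).card) :
    (Matrix.of fun a b : Fin ℓ =>
        M (A.orderEmbOfFin hA a) (B.orderEmbOfFin hB b)).det ∈
      Ideal.span {x : R | ∃ (i₁ i₂ : Fin d) (c₁ c₂ : Fin (k * ℓ)),
        c₁.val / k = c₂.val / k ∧
        x = M i₁ c₁ * M i₂ c₂ - M i₁ c₂ * M i₂ c₁} := by
  obtain ⟨j, hj⟩ := hmeet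
  exact ellMinor_mem_span_blockTwoMinors_general M (fun c => c.val / k) _ _
    (not_injective_comp_orderEmbOfFin hB _ hj)
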